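/- Let p be a prime and n ≥ 2. Let f ∈ 𝔽_p[x₁,…,xₙ] be a polynomial of total degree at most n of the form f = xₙ·g₁ + g₂, where g₁ and g₂ are polynomials in the variables x₁,…,x_{n−1} only (not involving xₙ). If Tr_{n−1}(g₁^{p−1}) = 1 in 𝔽_p[x₁,…,x_{n−1}] (so that g ↦ Tr_{n−1}(g₁^{p−1}·g) is a Frobenius splitting of 𝔽_p[x₁,…,x_{n−1}]), then Tr_n(f^{p−1}) = 1 in 𝔽_p[x₁,…,xₙ], so that g ↦ Tr_n(f^{p−1}·g) is a Frobenius splitting of 𝔽_p[x₁,…,xₙ]. -/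

import Mathlib

open MvPolynomial

/-- The near-splitting `Tr` on `𝔽_p[x₁,…,xₙ]`: on a monomial `∏ xᵢ^{eᵢ}` it gives
`∏ xᵢ^{(eᵢ+1)/p - 1}` if `p ∣ eᵢ + 1` for all `i`, and `0` otherwise, extended
`𝔽_p`-linearly (note that `c^{1/p} = c` for `c ∈ 𝔽_p`). -/
noncomputable def Tr (p n : ℕ) (g : MvPolynomial (Fin n) (ZMod p)) :
    MvPolynomial (Fin n) (ZMod p) :=
  ∑ m ∈ g.support,
    if ∀ i, p ∣ (m i + 1) then
      monomial (Finsupp.equivFunOnFinite.symm fun i => (m i + 1) / p - 1) (g.coeff m)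
    else 0

/-- A Frobenius splitting is an additive map `φ` with `φ (a^p * b) = a * φ b` and `φ 1 = 1`. -/
def IsFrobeniusSplitting (p : ℕ) {R : Type*} [CommRing R] (φ : R → R) : Prop :=
  (∀ a b : R, φ (a + b) = φ a + φ b) ∧ (∀ a b : R, φ (a ^ p * b) = a * φ b) ∧ φ 1 = 1

/-!
The trace merely relabels coefficients: the coefficient of `x ^ k` in `Tr g` is that of
`x ^ (p * k + (p - 1))` in `g`. Expanding `(xₙ₊₁ * g₁ + g₂) ^ (p - 1)` in powers of `xₙ₊₁`, the only
exponent `j ≤ p - 1` of the form `p * k + (p - 1)` is `j = p - 1`, so only the top term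
`xₙ₊₁ ^ (p - 1) * g₁ ^ (p - 1)` contributes.
-/

section TraceExponent

variable {σ : Type*} [Finite σ]

/-- The exponent `p * k + (p - 1, …, p - 1)`: the only one which `Tr` sends to `k`. The index type
is finite because the constant vector must be finitely supported. -/
noncomputable def traceExponent (p : ℕ) (k : σ →₀ ℕ) : σ →₀ ℕ :=
  p • k + Finsupp.equivFunOnFinite.symm fun _ => p - 1

lemma traceExponent_apply (p : ℕ) (k : σ →₀ ℕ) (i : σ) :
    traceExponent p k i = p * k i + (p - 1) := rfl

lemma traceExponent_add (p : ℕ) (s k : σ →₀ ℕ) :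
    traceExponent p (s + k) = p • s + traceExponent p k := by
  rw [traceExponent, traceExponent, smul_add, add_assoc]

lemma smul_le_traceExponent_iff {p : ℕ} (hp : 0 < p) {s k : σ →₀ ℕ} :
    p • s ≤ traceExponent p k ↔ s ≤ k := by
  refine forall_congr' fun i => ?_
  rw [Finsupp.smul_apply, smul_eq_mul, traceExponent_apply, mul_comm, ← Nat.le_div_iff_mul_le hp,
    Nat.mul_add_div hp, Nat.div_eq_of_lt (Nat.sub_one_lt hp.ne'), add_zero]

lemma comapDomain_traceExponent {τ : Type*} [Finite τ] {e : σ → τ} (he : Function.Injective e)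
    (p : ℕ) (k : τ →₀ ℕ) :
    (traceExponent p k).comapDomain e he.injOn = traceExponent p (k.comapDomain e he.injOn) := by
  ext i
  simp only [Finsupp.comapDomain_apply, traceExponent_apply]

end TraceExponent

lemma dvd_succ_and_div_sub_one_eq_iff {p : ℕ} (hp : 0 < p) {a b : ℕ} :
    p ∣ a + 1 ∧ (a + 1) / p - 1 = b ↔ a = p * b + (p - 1) := by
  constructor
  · rintro ⟨⟨c, hc⟩, hb⟩
    obtain ⟨c, rfl⟩ : ∃ d, c = d + 1 := Nat.exists_eq_succ_of_ne_zero (by rintro rfl; simp at hc)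
    rw [hc, Nat.mul_div_cancel_left _ hp, Nat.add_sub_cancel] at hb
    subst hb
    rw [Nat.mul_succ] at hc
    omega
  · intro ha
    have ha' : a + 1 = p * (b + 1) := by rw [Nat.mul_succ]; omega
    rw [ha', Nat.mul_div_cancel_left _ hp]
    exact ⟨dvd_mul_right _ _, Nat.add_sub_cancel _ _⟩

section Trace

variable {p n : ℕ}

lemma coeff_Tr (hp : 0 < p) (g : MvPolynomial (Fin n) (ZMod p)) (k : Fin n →₀ ℕ) :
    coeff k (Tr p n g) = coeff (traceExponent p k) g := by
  have exponent_iff (m : Fin n →₀ ℕ) :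
      ((∀ i, p ∣ m i + 1) ∧
        (Finsupp.equivFunOnFinite.symm fun i => (m i + 1) / p - 1) = k) ↔
          m = traceExponent p k := by
    simp only [Finsupp.ext_iff, ← forall_and, traceExponent_apply,
      ← dvd_succ_and_div_sub_one_eq_iff hp, Finsupp.coe_equivFunOnFinite_symm]
  simp only [Tr, coeff_sum, apply_ite (coeff k), coeff_monomial, coeff_zero, ← ite_and,
    exponent_iff, Finset.sum_ite_eq', mem_support_iff, ite_not]
  exact ite_eq_right_iff.2 Eq.symm

lemma Tr_add (hp : 0 < p) (a b : MvPolynomial (Fin n) (ZMod p)) :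
    Tr p n (a + b) = Tr p n a + Tr p n b := by
  ext k
  simp only [coeff_add, coeff_Tr hp]

lemma Tr_sum (hp : 0 < p) {ι : Type*} (s : Finset ι) (g : ι → MvPolynomial (Fin n) (ZMod p)) :
    Tr p n (∑ i ∈ s, g i) = ∑ i ∈ s, Tr p n (g i) := by
  ext k
  simp only [coeff_sum, coeff_Tr hp]

lemma Tr_monomial_smul_mul (hp : 0 < p) (s : Fin n →₀ ℕ) (c : ZMod p)
    (b : MvPolynomial (Fin n) (ZMod p)) :
    Tr p n (monomial (p • s) c * b) = monomial s c * Tr p n b := by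
  ext k
  simp only [coeff_Tr hp, coeff_monomial_mul', smul_le_traceExponent_iff hp]
  refine if_ctx_congr Iff.rfl (fun hs => ?_) fun _ => rfl
  obtain ⟨d, rfl⟩ := exists_add_of_le hs
  rw [traceExponent_add, add_tsub_cancel_left, add_tsub_cancel_left]

lemma Tr_pow_mul (hp : p.Prime) (a b : MvPolynomial (Fin n) (ZMod p)) :
    Tr p n (a ^ p * b) = a * Tr p n b := by
  have : Fact p.Prime := ⟨hp⟩
  induction a using MvPolynomial.induction_on' with
  | monomial s c => rw [monomial_pow, ZMod.pow_card, Tr_monomial_smul_mul hp.pos]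
  | add a a' ha ha' => rw [add_pow_char, add_mul, Tr_add hp.pos, ha, ha', add_mul]

lemma isFrobeniusSplitting_Tr_mul (hp : p.Prime) {u : MvPolynomial (Fin n) (ZMod p)}
    (hu : Tr p n u = 1) : IsFrobeniusSplitting p fun g => Tr p n (u * g) := by
  refine ⟨fun a b => ?_, fun a b => ?_, ?_⟩
  · simp only [mul_add, Tr_add hp.pos]
  · simp only [mul_left_comm u, Tr_pow_mul hp]
  · simpa only [mul_one] using hu

end Trace

section LastVariable

lemma single_last_add_mapDomain_castSucc_eq_iff {M : Type*} [AddCommMonoid M] {n : ℕ} {j : M}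
    {s : Fin n →₀ M} {m : Fin (n + 1) →₀ M} :
    Finsupp.single (Fin.last n) j + s.mapDomain Fin.castSucc = m ↔
      m (Fin.last n) = j ∧ s = m.comapDomain Fin.castSucc (Fin.castSucc_injective n).injOn := by
  have last_notMem : Fin.last n ∉ Set.range (Fin.castSucc : Fin n → Fin (n + 1)) := by
    simp only [Set.mem_range, Fin.castSucc_ne_last, exists_false, not_false_eq_true]
  simp only [Finsupp.ext_iff, Fin.forall_fin_succ', Finsupp.add_apply,
    Finsupp.comapDomain_apply, Finsupp.single_eq_same,
    Finsupp.mapDomain_of_notMem_range _ _ last_notMem,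
    Finsupp.single_eq_of_ne (Fin.castSucc_ne_last _),
    Finsupp.mapDomain_apply (Fin.castSucc_injective n), add_zero, zero_add]
  rw [and_comm, eq_comm]

lemma coeff_X_last_pow_mul_rename_castSucc {R : Type*} [CommSemiring R] {n : ℕ} (j : ℕ)
    (h : MvPolynomial (Fin n) R) (m : Fin (n + 1) →₀ ℕ) :
    coeff m (X (Fin.last n) ^ j * rename Fin.castSucc h) =
      if m (Fin.last n) = j then
        coeff (m.comapDomain Fin.castSucc (Fin.castSucc_injective n).injOn) h
      else 0 := by
  induction h using MvPolynomial.induction_on' with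
  | monomial s c =>
    simp only [rename_monomial, X_pow_eq_monomial, monomial_mul, coeff_monomial, one_mul,
      ← ite_and, single_last_add_mapDomain_castSucc_eq_iff]
  | add a a' ha ha' =>
    rw [map_add, mul_add, coeff_add, ha, ha', coeff_add, ite_add_ite, add_zero]

variable {p n : ℕ}

lemma Tr_X_last_pow_mul_rename_castSucc {j : ℕ} (hj : j < p)
    (h : MvPolynomial (Fin n) (ZMod p)) :
    Tr p (n + 1) (X (Fin.last n) ^ j * rename Fin.castSucc h) =
      if j = p - 1 then rename Fin.castSucc (Tr p n h) else 0 := by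
  have hp : 0 < p := Nat.zero_lt_of_lt hj
  have exponent_eq_iff (q : ℕ) : p * q + (p - 1) = j ↔ j = p - 1 ∧ q = 0 := by
    rcases Nat.eq_zero_or_pos q with rfl | hq
    · omega
    · have := Nat.le_mul_of_pos_right p hq
      omega
  ext k
  have coeff_rename := coeff_X_last_pow_mul_rename_castSucc 0 (Tr p n h) k
  rw [pow_zero, one_mul] at coeff_rename
  simp only [apply_ite (coeff k), coeff_rename, coeff_zero, coeff_Tr hp,
    coeff_X_last_pow_mul_rename_castSucc, traceExponent_apply, exponent_eq_iff, ite_and,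
    comapDomain_traceExponent (Fin.castSucc_injective n)]

theorem Tr_X_last_mul_add_pow_sub_one (hp : 0 < p) (g₁ g₂ : MvPolynomial (Fin n) (ZMod p)) :
    Tr p (n + 1) ((X (Fin.last n) * rename Fin.castSucc g₁ + rename Fin.castSucc g₂) ^ (p - 1)) =
      rename Fin.castSucc (Tr p n (g₁ ^ (p - 1))) := by
  have Tr_term : ∀ j ∈ Finset.range (p - 1 + 1),
      Tr p (n + 1) ((X (Fin.last n) * rename Fin.castSucc g₁) ^ j *
        rename Fin.castSucc g₂ ^ (p - 1 - j) * ((p - 1).choose j : MvPolynomial _ (ZMod p))) =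
      if j = p - 1 then
        rename Fin.castSucc
          (Tr p n (g₁ ^ j * g₂ ^ (p - 1 - j) * ((p - 1).choose j : MvPolynomial _ (ZMod p))))
      else 0 := by
    intro j hj
    rw [← Tr_X_last_pow_mul_rename_castSucc (by rw [Finset.mem_range] at hj; omega)]
    simp only [map_mul, map_pow, map_natCast, mul_pow, mul_assoc]
  rw [add_pow, Tr_sum hp, Finset.sum_congr rfl Tr_term, Finset.sum_ite_eq',
    if_pos (Finset.self_mem_range_succ _), Nat.sub_self, pow_zero, mul_one, Nat.choose_self,
    Nat.cast_one, mul_one]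

end LastVariable

theorem stmt_19_general {p : ℕ} (hp : p.Prime) {n : ℕ}
    (f : MvPolynomial (Fin (n + 1)) (ZMod p))
    (g₁ g₂ : MvPolynomial (Fin n) (ZMod p))
    (hf : f = X (Fin.last n) * rename Fin.castSucc g₁ + rename Fin.castSucc g₂)
    (h1 : Tr p n (g₁ ^ (p - 1)) = 1) :
    Tr p (n + 1) (f ^ (p - 1)) = 1 ∧
      IsFrobeniusSplitting p (fun g => Tr p (n + 1) (f ^ (p - 1) * g)) := by
  have Tr_f_pow : Tr p (n + 1) (f ^ (p - 1)) = 1 := by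
    rw [hf, Tr_X_last_mul_add_pow_sub_one hp.pos, h1, map_one]
  exact ⟨Tr_f_pow, isFrobeniusSplitting_Tr_mul hp Tr_f_pow⟩

/-- stated with `n + 1 ≥ 2` variables: let `f ∈ 𝔽_p[x₁,…,xₙ₊₁]` of total
degree at most `n + 1` have the form `f = xₙ₊₁·g₁ + g₂` where `g₁, g₂` involve only the
first `n` variables. If `Tr_n(g₁^{p−1}) = 1` (so `g ↦ Tr_n(g₁^{p−1}·g)` is a Frobenius
splitting of `𝔽_p[x₁,…,xₙ]`), then `Tr_{n+1}(f^{p−1}) = 1`, so `g ↦ Tr_{n+1}(f^{p−1}·g)`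
is a Frobenius splitting of `𝔽_p[x₁,…,xₙ₊₁]`. -/
theorem stmt_19 {p : ℕ} (hp : p.Prime) {n : ℕ} (hn : 1 ≤ n)
    (f : MvPolynomial (Fin (n + 1)) (ZMod p))
    (g₁ g₂ : MvPolynomial (Fin n) (ZMod p))
    (hdeg : f.totalDegree ≤ n + 1)
    (hf : f = X (Fin.last n) * rename Fin.castSucc g₁ + rename Fin.castSucc g₂)
    (h1 : Tr p n (g₁ ^ (p - 1)) = 1) :
    Tr p (n + 1) (f ^ (p - 1)) = 1 ∧
      IsFrobeniusSplitting p (fun g => Tr p (n + 1) (f ^ (p - 1) * g)) :=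
  stmt_19_general hp f g₁ g₂ hf h1
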